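/- Let d, k, r ∈ ℕ and let f : [0,1]^d → [−1,+1] be monotone. Then Σ over all α ∈ ℕ₀^d with |α|₀ > k and α_j ≤ 2^r − 1 for all j of f̃(α)² ≤ √(d·r)/(k+1), where |α|₀ = #{j : α_j > 0} and f̃(α) = ∫_{[0,1]^d} ψ_α f dλ^d are the Haar wavelet coefficients of f. -/

import Mathlib

open MeasureTheory

/-- The dyadic interval `I_{λ,κ} ⊆ [0,1]`. -/
noncomputable def haarI (lam kap : ℕ) : Set ℝ :=
  if kap = 2 ^ lam - 1 then Set.Icc (1 - (2 : ℝ) ^ (-(lam : ℤ))) 1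
  else Set.Ico ((kap : ℝ) * (2 : ℝ) ^ (-(lam : ℤ))) (((kap : ℝ) + 1) * (2 : ℝ) ^ (-(lam : ℤ)))

/-- The univariate Haar function `h_a` on `[0,1]`: `h_0 ≡ 1` and, for
`a = 2^λ + κ ≥ 1`, `h_a = 2^(λ/2) (𝟙_{I_{λ+1,2κ+1}} - 𝟙_{I_{λ+1,2κ}})`. -/
noncomputable def haarFn (a : ℕ) (t : ℝ) : ℝ :=
  if a = 0 then 1
  else
    (2 : ℝ) ^ ((Nat.log 2 a : ℝ) / 2) *
      ((haarI (Nat.log 2 a + 1) (2 * (a - 2 ^ Nat.log 2 a) + 1)).indicator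
          (fun _ => (1 : ℝ)) t -
        (haarI (Nat.log 2 a + 1) (2 * (a - 2 ^ Nat.log 2 a))).indicator
          (fun _ => (1 : ℝ)) t)

/-- The tensor Haar wavelet `ψ_α` on `[0,1]^d`. -/
noncomputable def haarPsi (d : ℕ) (α : Fin d → ℕ) (x : Fin d → ℝ) : ℝ :=
  ∏ j, haarFn (α j) (x j)

open scoped Finset

/-!
For a coordinate `j` and a level `l`, let `T` be the measure-preserving involution of the cube that
exchanges the two halves of every dyadic interval of length `2⁻ˡ` in the `j`-th coordinate. Every
wavelet `ψ_α` with `α_j` of level `l` satisfies `ψ_α ∘ T = -ψ_α`, so its coefficients see only the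
`T`-odd part `D = (f - f ∘ T) / 2` of `f`, and Bessel's inequality bounds the sum of their squares
by `∫ D²`. As `|D| ≤ 1` and `f` is monotone, `D² ≤ |D| = ρ D` for the Rademacher function `ρ` of
level `l` in the `j`-th coordinate, and `∫ ρ D = ∫ ρ f`.

Summing over the `d r` pairs `(j, l)` with `l < r` counts `f̃(α)²` exactly `|α|₀` times. The
Rademacher functions are orthonormal as well, so Bessel and Cauchy–Schwarz give
`∑ |α|₀ f̃(α)² ≤ ∑ ∫ ρ f ≤ √(d r)`, and restricting to `|α|₀ ≥ k + 1` yields the claim.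
-/

section OrthonormalSystems

variable {Ω ι : Type*} [MeasurableSpace Ω] {μ : Measure Ω} {v : ι → Ω → ℝ} {g : Ω → ℝ}

/-- `L2Orthonormal v μ` says that the functions `v i` form an orthonormal system in `L₂(μ)`. It is
a property of genuine functions rather than of their almost everywhere equality classes, so that
it applies to Haar and Rademacher functions directly. -/
structure L2Orthonormal (v : ι → Ω → ℝ) (μ : Measure Ω) : Prop where
  memLp : ∀ i, MemLp (v i) 2 μ
  integral_mul_eq_zero : ∀ i j, i ≠ j → ∫ x, v i x * v j x ∂μ = 0
  integral_sq_eq_one : ∀ i, ∫ x, v i x ^ 2 ∂μ = 1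

namespace L2Orthonormal

lemma bessel_inequality (hv : L2Orthonormal v μ) (hg : MemLp g 2 μ) (s : Finset ι) :
    ∑ i ∈ s, (∫ x, v i x * g x ∂μ) ^ 2 ≤ ∫ x, g x ^ 2 ∂μ := by
  classical
  have inner_toLp {a b : Ω → ℝ} (ha : MemLp a 2 μ) (hb : MemLp b 2 μ) :
      inner ℝ (ha.toLp a) (hb.toLp b) = ∫ x, a x * b x ∂μ := by
    rw [L2.inner_def]
    refine integral_congr_ae ?_
    filter_upwards [ha.coeFn_toLp, hb.coeFn_toLp] with x hax hbx
    rw [hax, hbx, real_inner_eq_re_inner, RCLike.inner_apply']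
    simp
  have orthonormal : Orthonormal ℝ fun i => (hv.memLp i).toLp (v i) := by
    rw [orthonormal_iff_ite]
    intro i j
    rw [inner_toLp]
    split_ifs with hij
    · simpa only [hij, ← pow_two] using hv.integral_sq_eq_one j
    · exact hv.integral_mul_eq_zero i j hij
  simpa only [inner_toLp, Real.norm_eq_abs, sq_abs, ← real_inner_self_eq_norm_sq, ← pow_two]
    using orthonormal.sum_inner_products_le (hg.toLp g) (s := s)

lemma sum_integral_mul_le_sqrt (hv : L2Orthonormal v μ) (hg : MemLp g 2 μ) (s : Finset ι) :
    ∑ i ∈ s, ∫ x, v i x * g x ∂μ ≤ √(#s * ∫ x, g x ^ 2 ∂μ) :=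
  Real.le_sqrt_of_sq_le <| sq_sum_le_card_mul_sum_sq.trans <|
    mul_le_mul_of_nonneg_left (hv.bessel_inequality hg s) (Nat.cast_nonneg _)

lemma pi {J : Type*} [Fintype J] {E I : J → Type*} [∀ j, MeasurableSpace (E j)]
    {ν : ∀ j, Measure (E j)} [∀ j, SigmaFinite (ν j)] {w : ∀ j, I j → E j → ℝ}
    (hw : ∀ j, L2Orthonormal (w j) (ν j)) :
    L2Orthonormal (fun (α : ∀ j, I j) x => ∏ j, w j (α j) (x j)) (Measure.pi ν) where
  memLp α := by
    have aesm : AEStronglyMeasurable (fun x => ∏ j, w j (α j) (x j)) (Measure.pi ν) :=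
      Finset.aestronglyMeasurable_fun_prod _ fun j _ =>
        ((hw j).memLp (α j)).aestronglyMeasurable.comp_quasiMeasurePreserving
          (Measure.quasiMeasurePreserving_eval ν j)
    rw [memLp_two_iff_integrable_sq aesm]
    simp_rw [← Finset.prod_pow]
    exact Integrable.fintype_prod_dep fun j => ((hw j).memLp (α j)).integrable_sq
  integral_mul_eq_zero α β hαβ := by
    obtain ⟨j, hj⟩ := Function.ne_iff.1 hαβ
    simp_rw [← Finset.prod_mul_distrib]
    rw [integral_fintype_prod_eq_prod fun j t => w j (α j) t * w j (β j) t]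
    exact Finset.prod_eq_zero (Finset.mem_univ j) ((hw j).integral_mul_eq_zero _ _ hj)
  integral_sq_eq_one α := by
    simp_rw [← Finset.prod_pow]
    rw [integral_fintype_prod_eq_prod fun j t => w j (α j) t ^ 2]
    exact Finset.prod_eq_one fun j _ => (hw j).integral_sq_eq_one (α j)

end L2Orthonormal

end OrthonormalSystems

section Involutions

variable {Ω : Type*} {T : Ω → Ω} {f : Ω → ℝ}

/-- The part of `f` that changes sign under the involution `T`. -/
noncomputable def oddPart (T : Ω → Ω) (f : Ω → ℝ) (x : Ω) : ℝ := (f x - f (T x)) / 2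

lemma abs_oddPart_le_one {x : Ω} (hx : f x ∈ Set.Icc (-1) 1) (hTx : f (T x) ∈ Set.Icc (-1) 1) :
    |oddPart T f x| ≤ 1 := by
  rw [oddPart, abs_le]
  constructor <;> linarith [hx.1, hx.2, hTx.1, hTx.2]

variable [MeasurableSpace Ω] {μ : Measure Ω}

lemma measurePreserving_piecewise {E : Set Ω} [DecidablePred (· ∈ E)] {g g' : Ω → Ω}
    (hE : MeasurableSet E) (hg : MeasurePreserving g μ μ) (hg' : MeasurePreserving g' μ μ)
    (hgE : g ⁻¹' Eᶜ = E) (hgE' : g' ⁻¹' E = Eᶜ) : MeasurePreserving (E.piecewise g g') μ μ := by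
  have meas : Measurable (E.piecewise g g') := hg.measurable.piecewise hE hg'.measurable
  refine ⟨meas, Measure.ext fun A hA => ?_⟩
  have inter : E.piecewise g g' ⁻¹' A ∩ E = g ⁻¹' (A \ E) := by
    rw [Set.piecewise_preimage, Set.ite_inter_self, Set.sdiff_eq, Set.preimage_inter, hgE]
  have diff : E.piecewise g g' ⁻¹' A \ E = g' ⁻¹' (A ∩ E) := by
    rw [Set.piecewise_preimage, Set.ite_sdiff_self, Set.preimage_inter, hgE', Set.sdiff_eq]
  rw [Measure.map_apply meas hA, ← measure_inter_add_sdiff _ hE, inter, diff,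
    hg.measure_preimage (hA.diff hE).nullMeasurableSet,
    hg'.measure_preimage (hA.inter hE).nullMeasurableSet, add_comm, measure_inter_add_sdiff A hE]

lemma measurePreserving_update {ι : Type*} [Fintype ι] [DecidableEq ι] {X : ι → Type*}
    [∀ i, MeasurableSpace (X i)] {ν : ∀ i, Measure (X i)} [∀ i, SigmaFinite (ν i)] (j : ι)
    {φ : X j → X j} (hφ : MeasurePreserving φ (ν j) (ν j)) :
    MeasurePreserving (fun x => Function.update x j (φ (x j))) (Measure.pi ν) (Measure.pi ν) := by
  have coordinatewise : ∀ i, MeasurePreserving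
      (Function.update (fun i => (id : X i → X i)) j φ i) (ν i) (ν i) := by
    intro i
    rcases eq_or_ne i j with rfl | hij
    · simpa only [Function.update_self] using hφ
    · simpa only [Function.update_of_ne hij] using MeasurePreserving.id (ν i)
  convert! measurePreserving_pi ν ν coordinatewise using 3 with x i
  rcases eq_or_ne i j with rfl | hij
  · simp only [Function.update_self]
  · simp only [Function.update_of_ne hij, id]

lemma integral_comp_of_involutive (hT : MeasurePreserving T μ μ) (hinv : Function.Involutive T)
    (g : Ω → ℝ) : ∫ x, g (T x) ∂μ = ∫ x, g x ∂μ :=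
  hT.integral_comp' (f := MeasurableEquiv.ofInvolutive T hinv hT.measurable) g

lemma integral_eq_zero_of_comp_eq_neg (hT : MeasurePreserving T μ μ)
    (hinv : Function.Involutive T) {g : Ω → ℝ} (hg : ∀ᵐ x ∂μ, g (T x) = -g x) :
    ∫ x, g x ∂μ = 0 := by
  have h := integral_comp_of_involutive hT hinv g
  rw [integral_congr_ae hg, integral_neg] at h
  linarith

lemma memLp_oddPart (hT : MeasurePreserving T μ μ) (hf : MemLp f 2 μ) :
    MemLp (oddPart T f) 2 μ := by
  have h := (hf.sub (hf.comp_measurePreserving hT)).mul_const (1 / 2)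
  convert! h using 2 with x
  rw [oddPart, div_eq_mul_one_div, Pi.sub_apply, Function.comp_apply]

lemma integral_mul_oddPart (hT : MeasurePreserving T μ μ) (hinv : Function.Involutive T)
    (hf : MemLp f 2 μ) {v : Ω → ℝ} (hv : MemLp v 2 μ) (hvT : ∀ᵐ x ∂μ, v (T x) = -v x) :
    ∫ x, v x * oddPart T f x ∂μ = ∫ x, v x * f x ∂μ := by
  have integrable_odd : Integrable (fun x => v x * oddPart T f x) μ :=
    hv.integrable_mul (memLp_oddPart hT hf)
  have integrable : Integrable (fun x => v x * f x) μ := hv.integrable_mul hf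
  have even_part : ∫ x, v x * f x - v x * oddPart T f x ∂μ = 0 := by
    refine integral_eq_zero_of_comp_eq_neg hT hinv ?_
    filter_upwards [hvT] with x hx
    rw [hx, oddPart, oddPart, hinv x]
    ring
  rw [integral_sub integrable integrable_odd] at even_part
  linarith

lemma sum_sq_integral_mul_le_of_comp_eq_neg {ι : Type*} {v : ι → Ω → ℝ} {s : Finset ι} {ρ : Ω → ℝ}
    (hT : MeasurePreserving T μ μ) (hinv : Function.Involutive T) (hv : L2Orthonormal v μ)
    (hvT : ∀ i ∈ s, ∀ᵐ x ∂μ, v i (T x) = -v i x) (hρ : MemLp ρ 2 μ)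
    (hρT : ∀ᵐ x ∂μ, ρ (T x) = -ρ x) (hf : MemLp f 2 μ)
    (hle : ∀ᵐ x ∂μ, |oddPart T f x| ≤ 1)
    (hsign : ∀ᵐ x ∂μ, ρ x * oddPart T f x = |oddPart T f x|) :
    ∑ i ∈ s, (∫ x, v i x * f x ∂μ) ^ 2 ≤ ∫ x, ρ x * f x ∂μ := by
  have hD := memLp_oddPart hT hf
  calc ∑ i ∈ s, (∫ x, v i x * f x ∂μ) ^ 2
      = ∑ i ∈ s, (∫ x, v i x * oddPart T f x ∂μ) ^ 2 :=
        Finset.sum_congr rfl fun i hi => by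
          rw [integral_mul_oddPart hT hinv hf (hv.memLp i) (hvT i hi)]
    _ ≤ ∫ x, oddPart T f x ^ 2 ∂μ := hv.bessel_inequality hD s
    _ ≤ ∫ x, ρ x * oddPart T f x ∂μ := by
        refine integral_mono_ae hD.integrable_sq (hρ.integrable_mul hD) ?_
        filter_upwards [hle, hsign] with x hx hxsign
        rw [hxsign, ← sq_abs]
        exact pow_le_of_le_one (abs_nonneg _) hx two_ne_zero
    _ = ∫ x, ρ x * f x ∂μ := integral_mul_oddPart hT hinv hf hρ hρT

end Involutions

section DyadicFlip

/-- The integer `κ` with `κ 2⁻ˡ ≤ t < (κ + 1) 2⁻ˡ`, i.e. the position of `t` on the dyadic grid of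
level `l`. -/
noncomputable def dyadicIndex (l : ℕ) (t : ℝ) : ℤ := ⌊2 ^ l * t⌋

/-- The Rademacher function of level `l`: `-1` on the left and `1` on the right half of every
dyadic interval of length `2⁻ˡ`. -/
noncomputable def rademacher (l : ℕ) (t : ℝ) : ℝ := if Even (dyadicIndex (l + 1) t) then -1 else 1

/-- The involution of `ℝ` exchanging, by translation, the two halves of every dyadic interval of
length `2⁻ˡ`. -/
noncomputable def dyadicFlip (l : ℕ) (t : ℝ) : ℝ := t - rademacher l t / 2 ^ (l + 1)

lemma dyadicIndex_eq_iff {l : ℕ} {t : ℝ} {n : ℤ} :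
    dyadicIndex l t = n ↔ t ∈ Set.Ico ((n : ℝ) / 2 ^ l) ((n + 1) / 2 ^ l) := by
  have hl : (0 : ℝ) < 2 ^ l := by positivity
  rw [dyadicIndex, Int.floor_eq_iff, Set.mem_Ico, div_le_iff₀' hl, lt_div_iff₀' hl]

lemma mem_Ico_zero_one_iff {t : ℝ} : t ∈ Set.Ico (0 : ℝ) 1 ↔ dyadicIndex 0 t = 0 := by
  simp [dyadicIndex_eq_iff]

lemma dyadicIndex_of_le {m l : ℕ} (hml : m ≤ l) (t : ℝ) :
    dyadicIndex m t = dyadicIndex l t / 2 ^ (l - m) := by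
  obtain ⟨e, rfl⟩ := Nat.exists_eq_add_of_le hml
  have rescale : (2 : ℝ) ^ m * t = 2 ^ (m + e) * t / ((2 ^ e : ℕ) : ℝ) := by
    push_cast
    field_simp
    ring
  rw [dyadicIndex, dyadicIndex, rescale, Int.floor_div_natCast, Nat.add_sub_cancel_left]
  push_cast
  rfl

lemma dyadicIndex_eq_succ_div_two (l : ℕ) (t : ℝ) :
    dyadicIndex l t = dyadicIndex (l + 1) t / 2 := by
  simpa using dyadicIndex_of_le l.le_succ t

lemma dyadicIndex_add_inv (l : ℕ) (t : ℝ) :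
    dyadicIndex l (t + 1 / 2 ^ l) = dyadicIndex l t + 1 := by
  rw [dyadicIndex, mul_add, mul_one_div_cancel (by positivity), Int.floor_add_one, dyadicIndex]

lemma dyadicIndex_sub_inv (l : ℕ) (t : ℝ) :
    dyadicIndex l (t - 1 / 2 ^ l) = dyadicIndex l t - 1 := by
  rw [dyadicIndex, mul_sub, mul_one_div_cancel (by positivity), Int.floor_sub_one, dyadicIndex]

lemma measurable_dyadicIndex (l : ℕ) : Measurable (dyadicIndex l) := by
  unfold dyadicIndex
  fun_prop

lemma measurableSet_even_dyadicIndex (l : ℕ) : MeasurableSet {t | Even (dyadicIndex l t)} :=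
  measurable_dyadicIndex l (MeasurableSet.of_discrete (s := {n : ℤ | Even n}))

lemma measurable_rademacher (l : ℕ) : Measurable (rademacher l) :=
  Measurable.ite (measurableSet_even_dyadicIndex _) measurable_const measurable_const

lemma abs_rademacher (l : ℕ) (t : ℝ) : |rademacher l t| = 1 := by
  unfold rademacher
  split_ifs <;> norm_num

lemma rademacher_sq (l : ℕ) (t : ℝ) : rademacher l t ^ 2 = 1 := by
  rw [← sq_abs, abs_rademacher, one_pow]

lemma dyadicFlip_eq_piecewise (l : ℕ) :
    dyadicFlip l = {t | Even (dyadicIndex (l + 1) t)}.piecewise (· + 1 / 2 ^ (l + 1))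
      (· - 1 / 2 ^ (l + 1)) := by
  ext t
  simp only [dyadicFlip, rademacher, Set.piecewise, Set.mem_ofPred_eq]
  split_ifs <;> ring

lemma dyadicIndex_succ_dyadicFlip (l : ℕ) (t : ℝ) :
    dyadicIndex (l + 1) (dyadicFlip l t) =
      if Even (dyadicIndex (l + 1) t) then dyadicIndex (l + 1) t + 1
      else dyadicIndex (l + 1) t - 1 := by
  simp only [dyadicFlip_eq_piecewise, Set.piecewise, Set.mem_ofPred_eq]
  split_ifs
  · exact dyadicIndex_add_inv _ _
  · exact dyadicIndex_sub_inv _ _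

lemma rademacher_dyadicFlip (l : ℕ) (t : ℝ) :
    rademacher l (dyadicFlip l t) = -rademacher l t := by
  rw [rademacher, rademacher, dyadicIndex_succ_dyadicFlip]
  by_cases h : Even (dyadicIndex (l + 1) t) <;> simp [h, parity_simps]

lemma dyadicFlip_involutive (l : ℕ) : Function.Involutive (dyadicFlip l) := by
  intro t
  rw [dyadicFlip, rademacher_dyadicFlip, dyadicFlip]
  ring

lemma dyadicIndex_dyadicFlip_of_le {m l : ℕ} (hml : m ≤ l) (t : ℝ) :
    dyadicIndex m (dyadicFlip l t) = dyadicIndex m t := by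
  have same_level : dyadicIndex l (dyadicFlip l t) = dyadicIndex l t := by
    rw [dyadicIndex_eq_succ_div_two, dyadicIndex_eq_succ_div_two l t, dyadicIndex_succ_dyadicFlip]
    split_ifs <;> grind
  rw [dyadicIndex_of_le hml, same_level, ← dyadicIndex_of_le hml]

lemma rademacher_dyadicFlip_of_lt {m l : ℕ} (hml : m < l) (t : ℝ) :
    rademacher m (dyadicFlip l t) = rademacher m t := by
  rw [rademacher, dyadicIndex_dyadicFlip_of_le hml, rademacher]

lemma dyadicFlip_mem_Ico_iff (l : ℕ) (t : ℝ) :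
    dyadicFlip l t ∈ Set.Ico (0 : ℝ) 1 ↔ t ∈ Set.Ico (0 : ℝ) 1 := by
  rw [mem_Ico_zero_one_iff, dyadicIndex_dyadicFlip_of_le l.zero_le, ← mem_Ico_zero_one_iff]

lemma measurePreserving_dyadicFlip (l : ℕ) : MeasurePreserving (dyadicFlip l) := by
  rw [dyadicFlip_eq_piecewise]
  refine measurePreserving_piecewise (measurableSet_even_dyadicIndex _)
    (measurePreserving_add_right _ _) (measurePreserving_sub_right _ _) ?_ ?_ <;> ext t
  · simp [dyadicIndex_add_inv, parity_simps, -one_div]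
  · simp [dyadicIndex_sub_inv, parity_simps, -one_div]

end DyadicFlip

section HaarFunctions

/-- Lebesgue measure on `[0, 1)`. The interval is half-open so that every `dyadicFlip` maps it
onto itself. -/
noncomputable abbrev unitIntervalMeasure : Measure ℝ := volume.restrict (Set.Ico 0 1)

instance : IsProbabilityMeasure unitIntervalMeasure := ⟨by simp⟩

lemma measurePreserving_dyadicFlip_unitIntervalMeasure (l : ℕ) :
    MeasurePreserving (dyadicFlip l) unitIntervalMeasure unitIntervalMeasure := by
  have preimage : dyadicFlip l ⁻¹' Set.Ico 0 1 = Set.Ico 0 1 :=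
    Set.ext (dyadicFlip_mem_Ico_iff l)
  simpa only [preimage] using
    (measurePreserving_dyadicFlip l).restrict_preimage (measurableSet_Ico (a := 0) (b := 1))

lemma measurableSet_haarI (l n : ℕ) : MeasurableSet (haarI l n) := by
  unfold haarI
  split_ifs
  exacts [measurableSet_Icc, measurableSet_Ico]

lemma mem_haarI_iff (l n : ℕ) {t : ℝ} (ht : t ∈ Set.Ico (0 : ℝ) 1) :
    t ∈ haarI l n ↔ dyadicIndex l t = n := by
  rw [dyadicIndex_eq_iff, haarI, zpow_neg, zpow_natCast]
  push_cast
  split_ifs with hn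
  · have left : (n : ℝ) / 2 ^ l = 1 - (2 ^ l)⁻¹ := by
      rw [hn, Nat.cast_sub Nat.one_le_two_pow]
      field_simp
      push_cast
      rfl
    have right : ((n : ℝ) + 1) / 2 ^ l = 1 := by
      rw [add_div, left]
      ring
    rw [left, right]
    exact ⟨fun h => ⟨h.1, ht.2⟩, fun h => ⟨h.1, h.2.le⟩⟩
  · rw [← div_eq_mul_inv, ← div_eq_mul_inv]

lemma memLp_haarFn (a : ℕ) : MemLp (haarFn a) 2 unitIntervalMeasure := by
  unfold haarFn
  have indicator (l n : ℕ) :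
      MemLp ((haarI l n).indicator fun _ => (1 : ℝ)) 2 unitIntervalMeasure :=
    memLp_indicator_const 2 (measurableSet_haarI l n) 1 (Or.inr (measure_ne_top _ _))
  split_ifs
  · exact memLp_const 1
  · exact ((indicator _ _).sub (indicator _ _)).const_mul _

lemma haarFn_eq_rademacher {a : ℕ} (ha : a ≠ 0) {t : ℝ} (ht : t ∈ Set.Ico (0 : ℝ) 1) :
    haarFn a t = if dyadicIndex (Nat.log 2 a) t + 2 ^ Nat.log 2 a = a
      then 2 ^ ((Nat.log 2 a : ℝ) / 2) * rademacher (Nat.log 2 a) t else 0 := by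
  have hlog : ((a - 2 ^ Nat.log 2 a : ℕ) : ℤ) = a - 2 ^ Nat.log 2 a := by
    rw [Nat.cast_sub (Nat.pow_log_le_self 2 ha)]
    push_cast
    rfl
  simp only [haarFn, ha, if_false, Set.indicator, mem_haarI_iff _ _ ht, rademacher,
    dyadicIndex_eq_succ_div_two (Nat.log 2 a) t]
  push_cast
  rw [hlog]
  generalize dyadicIndex (Nat.log 2 a + 1) t = n
  split_ifs <;> grind

lemma haarFn_dyadicFlip_log {a : ℕ} (ha : a ≠ 0) {t : ℝ} (ht : t ∈ Set.Ico (0 : ℝ) 1) :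
    haarFn a (dyadicFlip (Nat.log 2 a) t) = -haarFn a t := by
  rw [haarFn_eq_rademacher ha ((dyadicFlip_mem_Ico_iff _ t).2 ht), haarFn_eq_rademacher ha ht,
    dyadicIndex_dyadicFlip_of_le le_rfl, rademacher_dyadicFlip]
  split_ifs <;> ring

lemma haarFn_dyadicFlip_of_log_lt {a l : ℕ} (hal : a ≠ 0 → Nat.log 2 a < l) {t : ℝ}
    (ht : t ∈ Set.Ico (0 : ℝ) 1) : haarFn a (dyadicFlip l t) = haarFn a t := by
  rcases eq_or_ne a 0 with rfl | ha
  · simp only [haarFn, if_true]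
  · rw [haarFn_eq_rademacher ha ((dyadicFlip_mem_Ico_iff _ t).2 ht), haarFn_eq_rademacher ha ht,
      dyadicIndex_dyadicFlip_of_le (hal ha).le, rademacher_dyadicFlip_of_lt (hal ha)]

lemma integral_haarFn_mul_of_lt {a b : ℕ} (hab : a < b) :
    ∫ t, haarFn a t * haarFn b t ∂unitIntervalMeasure = 0 := by
  have hb : b ≠ 0 := Nat.ne_zero_of_lt hab
  by_cases same_level : a ≠ 0 ∧ Nat.log 2 a = Nat.log 2 b
  · obtain ⟨ha, hlog⟩ := same_level
    refine integral_eq_zero_of_ae ?_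
    filter_upwards [ae_restrict_mem measurableSet_Ico] with t ht
    rw [haarFn_eq_rademacher ha ht, haarFn_eq_rademacher hb ht, hlog]
    dsimp only [Pi.zero_apply]
    split_ifs <;> first | omega | simp only [mul_zero, zero_mul]
  · have finer : a ≠ 0 → Nat.log 2 a < Nat.log 2 b := fun ha =>
      (Nat.log_mono_right hab.le).lt_of_ne fun h => same_level ⟨ha, h⟩
    refine integral_eq_zero_of_comp_eq_neg
      (measurePreserving_dyadicFlip_unitIntervalMeasure (Nat.log 2 b))
      (dyadicFlip_involutive _) ?_
    filter_upwards [ae_restrict_mem measurableSet_Ico] with t ht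
    rw [haarFn_dyadicFlip_of_log_lt finer ht, haarFn_dyadicFlip_log hb ht, mul_neg]

lemma measureReal_dyadicIndex_preimage_singleton {l : ℕ} {n : ℤ} (hn : 0 ≤ n) (hnl : n < 2 ^ l) :
    unitIntervalMeasure.real (dyadicIndex l ⁻¹' {n}) = (2 ^ l)⁻¹ := by
  have interval : dyadicIndex l ⁻¹' {n} = Set.Ico ((n : ℝ) / 2 ^ l) ((n + 1) / 2 ^ l) :=
    Set.ext fun _ => dyadicIndex_eq_iff
  have subset : Set.Ico ((n : ℝ) / 2 ^ l) ((n + 1) / 2 ^ l) ⊆ Set.Ico 0 1 := by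
    refine Set.Ico_subset_Ico (by positivity) ?_
    rw [div_le_one (by positivity)]
    exact_mod_cast hnl
  rw [interval, measureReal_restrict_apply measurableSet_Ico, Set.inter_eq_left.2 subset,
    Real.volume_real_Ico_of_le (by gcongr; linarith)]
  ring

lemma integral_haarFn_sq (a : ℕ) : ∫ t, haarFn a t ^ 2 ∂unitIntervalMeasure = 1 := by
  rcases eq_or_ne a 0 with rfl | ha
  · simp [haarFn]
  set l := Nat.log 2 a with hl
  have lower : (2 : ℤ) ^ l ≤ a := by exact_mod_cast Nat.pow_log_le_self 2 ha
  have upper : (a : ℤ) < 2 ^ (l + 1) := by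
    exact_mod_cast Nat.lt_pow_succ_log_self one_lt_two a
  have height : ((2 : ℝ) ^ ((l : ℝ) / 2)) ^ 2 = 2 ^ l := by
    rw [← Real.rpow_mul_natCast zero_le_two, Nat.cast_ofNat, div_mul_cancel₀ _ two_ne_zero,
      Real.rpow_natCast]
  have sq_eq_indicator : (fun t => haarFn a t ^ 2) =ᵐ[unitIntervalMeasure]
      (dyadicIndex l ⁻¹' {(a : ℤ) - 2 ^ l}).indicator fun _ => (2 : ℝ) ^ l := by
    filter_upwards [ae_restrict_mem measurableSet_Ico] with t ht
    simp only [haarFn_eq_rademacher ha ht, Set.indicator, Set.mem_preimage,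
      Set.mem_singleton_iff, ← hl, eq_sub_iff_add_eq]
    split_ifs
    · rw [mul_pow, rademacher_sq, height, mul_one]
    · exact zero_pow two_ne_zero
  rw [integral_congr_ae sq_eq_indicator,
    integral_indicator_const _ (measurable_dyadicIndex l (measurableSet_singleton _)),
    measureReal_dyadicIndex_preimage_singleton (by linarith) (by rw [pow_succ] at upper; linarith),
    smul_eq_mul, inv_mul_cancel₀ (by positivity)]

lemma l2Orthonormal_haarFn : L2Orthonormal haarFn unitIntervalMeasure where
  memLp := memLp_haarFn
  integral_mul_eq_zero a b hab := by
    rcases hab.lt_or_gt with h | h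
    · exact integral_haarFn_mul_of_lt h
    · simpa only [mul_comm] using integral_haarFn_mul_of_lt h
  integral_sq_eq_one := integral_haarFn_sq

end HaarFunctions

section UnitCube

variable {ι : Type*}

/-- Lebesgue measure on the half-open unit cube `[0, 1)^ι`. -/
noncomputable abbrev unitCubeMeasure (ι : Type*) [Fintype ι] : Measure (ι → ℝ) :=
  Measure.pi fun _ => unitIntervalMeasure

/-- The involution of the cube that applies `dyadicFlip l` to the `j`-th coordinate. -/
noncomputable def cubeFlip [DecidableEq ι] (j : ι) (l : ℕ) (x : ι → ℝ) : ι → ℝ :=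
  Function.update x j (dyadicFlip l (x j))

lemma restrict_Icc_eq_unitCubeMeasure [Fintype ι] :
    volume.restrict (Set.Icc (0 : ι → ℝ) 1) = unitCubeMeasure ι := by
  rw [unitCubeMeasure, ← Measure.restrict_pi_pi, volume_pi]
  exact (Measure.restrict_congr_set Measure.univ_pi_Ico_ae_eq_Icc).symm

lemma ae_unitCubeMeasure_mem_Ico [Fintype ι] :
    ∀ᵐ x ∂unitCubeMeasure ι, ∀ i, x i ∈ Set.Ico (0 : ℝ) 1 := by
  rw [unitCubeMeasure, ← Measure.restrict_pi_pi]
  filter_upwards [ae_restrict_mem (MeasurableSet.univ_pi fun _ => measurableSet_Ico)] with x hx i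
  exact hx i (Set.mem_univ i)

lemma ae_unitCubeMeasure_mem_Icc [Fintype ι] :
    ∀ᵐ x ∂unitCubeMeasure ι, x ∈ Set.Icc (0 : ι → ℝ) 1 := by
  rw [← restrict_Icc_eq_unitCubeMeasure]
  exact ae_restrict_mem measurableSet_Icc

lemma aemeasurable_restrict_of_monotoneOn_pi [Fintype ι] {β : Type*} [LinearOrder β]
    [TopologicalSpace β] [OrderTopology β] [SecondCountableTopology β] [MeasurableSpace β]
    [BorelSpace β] {s : Set (ι → ℝ)} (hs : s.OrdConnected) {f : (ι → ℝ) → β}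
    (hf : MonotoneOn f s) : AEMeasurable f (volume.restrict s) := by
  have superlevel (c : β) : NullMeasurableSet (f ⁻¹' Set.Ioi c) (volume.restrict s) := by
    rw [nullMeasurableSet_restrict hs.nullMeasurableSet]
    refine Set.OrdConnected.nullMeasurableSet ⟨fun x hx z hz y hy => ?_⟩
    have hys : y ∈ s := hs.out hx.2 hz.2 hy
    exact ⟨hx.1.trans_le (hf hx.2 hys hy.1), hys⟩
  exact NullMeasurable.aemeasurable <|
    measurable_of_Ioi (δ := NullMeasurableSpace (ι → ℝ) (volume.restrict s)) superlevel

lemma memLp_unitCubeMeasure_of_monotoneOn [Fintype ι] {f : (ι → ℝ) → ℝ}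
    (hf : MonotoneOn f (Set.Icc 0 1)) (p : ENNReal) : MemLp f p (unitCubeMeasure ι) := by
  have aemeas : AEMeasurable f (unitCubeMeasure ι) := by
    rw [← restrict_Icc_eq_unitCubeMeasure]
    exact aemeasurable_restrict_of_monotoneOn_pi Set.ordConnected_Icc hf
  refine MemLp.of_bound aemeas.aestronglyMeasurable (max |f 0| |f 1|) ?_
  filter_upwards [ae_unitCubeMeasure_mem_Icc] with x hx
  exact abs_le_max_abs_abs
    (hf (Set.left_mem_Icc.2 zero_le_one) hx hx.1) (hf hx (Set.right_mem_Icc.2 zero_le_one) hx.2)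

section Flip

variable [DecidableEq ι] (j : ι) (l : ℕ)

lemma cubeFlip_involutive : Function.Involutive (cubeFlip j l) := by
  intro x
  simp only [cubeFlip, Function.update_self, Function.update_idem, dyadicFlip_involutive l (x j),
    Function.update_eq_self]

lemma measurePreserving_cubeFlip [Fintype ι] :
    MeasurePreserving (cubeFlip j l) (unitCubeMeasure ι) (unitCubeMeasure ι) :=
  measurePreserving_update j (measurePreserving_dyadicFlip_unitIntervalMeasure l)

lemma rademacher_cubeFlip (x : ι → ℝ) :
    rademacher l (cubeFlip j l x j) = -rademacher l (x j) := by
  rw [cubeFlip, Function.update_self, rademacher_dyadicFlip]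

lemma rademacher_cubeFlip_of_ne_or_lt {i j : ι} {m l : ℕ} (h : i ≠ j ∨ m < l) (x : ι → ℝ) :
    rademacher m (cubeFlip j l x i) = rademacher m (x i) := by
  rcases eq_or_ne i j with rfl | hij
  · rw [cubeFlip, Function.update_self,
      rademacher_dyadicFlip_of_lt (h.resolve_left (not_not.2 rfl))]
  · rw [cubeFlip, Function.update_of_ne hij]

lemma rademacher_mul_oddPart_cubeFlip {f : (ι → ℝ) → ℝ} {s : Set (ι → ℝ)} (hf : MonotoneOn f s)
    {x : ι → ℝ} (hx : x ∈ s) (hflip : cubeFlip j l x ∈ s) :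
    rademacher l (x j) * oddPart (cubeFlip j l) f x = |oddPart (cubeFlip j l) f x| := by
  rcases eq_or_eq_neg_of_abs_eq (abs_rademacher l (x j)) with hr | hr
  · have flip_le : cubeFlip j l x ≤ x := by
      rw [cubeFlip, update_le_self_iff, dyadicFlip, hr, sub_le_self_iff]
      positivity
    have nonneg : 0 ≤ oddPart (cubeFlip j l) f x := by
      rw [oddPart]
      linarith [hf hflip hx flip_le]
    rw [hr, one_mul, abs_of_nonneg nonneg]
  · have le_flip : x ≤ cubeFlip j l x := by
      rw [cubeFlip, le_update_self_iff, dyadicFlip, hr, neg_div, sub_neg_eq_add,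
        le_add_iff_nonneg_right]
      positivity
    have nonpos : oddPart (cubeFlip j l) f x ≤ 0 := by
      rw [oddPart]
      linarith [hf hx hflip le_flip]
    rw [hr, neg_one_mul, abs_of_nonpos nonpos]

end Flip

lemma memLp_rademacher_apply [Fintype ι] (j : ι) (l : ℕ) (p : ENNReal) :
    MemLp (fun x => rademacher l (x j)) p (unitCubeMeasure ι) :=
  MemLp.of_bound ((measurable_rademacher l).comp (measurable_pi_apply j)).aestronglyMeasurable 1
    (Filter.Eventually.of_forall fun x => (abs_rademacher l (x j)).le)

lemma integral_rademacher_mul_of_ne_or_lt [Fintype ι] {i j : ι} {m l : ℕ} (h : i ≠ j ∨ m < l) :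
    ∫ x, rademacher m (x i) * rademacher l (x j) ∂unitCubeMeasure ι = 0 := by
  classical
  refine integral_eq_zero_of_comp_eq_neg (measurePreserving_cubeFlip j l)
    (cubeFlip_involutive j l) (Filter.Eventually.of_forall fun x => ?_)
  rw [rademacher_cubeFlip_of_ne_or_lt h, rademacher_cubeFlip, mul_neg]

lemma l2Orthonormal_rademacher [Fintype ι] :
    L2Orthonormal (fun (p : ι × ℕ) x => rademacher p.2 (x p.1)) (unitCubeMeasure ι) where
  memLp p := memLp_rademacher_apply p.1 p.2 2
  integral_mul_eq_zero := by
    rintro ⟨i, m⟩ ⟨j, l⟩ hne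
    by_cases h : i ≠ j ∨ m < l
    · exact integral_rademacher_mul_of_ne_or_lt h
    · have hlm : l < m := by grind
      simpa only [mul_comm] using
        integral_rademacher_mul_of_ne_or_lt (i := j) (j := i) (Or.inr hlm)
  integral_sq_eq_one p := by
    simp only [rademacher_sq, integral_const, probReal_univ, one_smul]

end UnitCube

section HaarWavelets

variable {d : ℕ} {f : (Fin d → ℝ) → ℝ}

lemma l2Orthonormal_haarPsi : L2Orthonormal (haarPsi d) (unitCubeMeasure (Fin d)) :=
  L2Orthonormal.pi fun _ => l2Orthonormal_haarFn

lemma haarPsi_cubeFlip {α : Fin d → ℕ} {j : Fin d} (hj : α j ≠ 0) {x : Fin d → ℝ}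
    (hx : x j ∈ Set.Ico (0 : ℝ) 1) :
    haarPsi d α (cubeFlip j (Nat.log 2 (α j)) x) = -haarPsi d α x := by
  rw [haarPsi, haarPsi, ← Finset.mul_prod_erase _ _ (Finset.mem_univ j),
    ← Finset.mul_prod_erase _ (fun i => haarFn (α i) (x i)) (Finset.mem_univ j), ← neg_mul]
  congr 1
  · rw [cubeFlip, Function.update_self, haarFn_dyadicFlip_log hj hx]
  · refine Finset.prod_congr rfl fun i hi => ?_
    rw [cubeFlip, Function.update_of_ne (Finset.ne_of_mem_erase hi)]

lemma sum_sq_integral_haarPsi_mul_le_integral_rademacher_mul (hf : MonotoneOn f (Set.Icc 0 1))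
    (hval : ∀ x ∈ Set.Icc 0 1, f x ∈ Set.Icc (-1) 1) {j : Fin d} {l : ℕ}
    {s : Finset (Fin d → ℕ)} (hs : ∀ α ∈ s, α j ≠ 0 ∧ Nat.log 2 (α j) = l) :
    ∑ α ∈ s, (∫ x, haarPsi d α x * f x ∂unitCubeMeasure (Fin d)) ^ 2 ≤
      ∫ x, rademacher l (x j) * f x ∂unitCubeMeasure (Fin d) := by
  have hT := measurePreserving_cubeFlip j l
  have flip_mem : ∀ᵐ x ∂unitCubeMeasure (Fin d), cubeFlip j l x ∈ Set.Icc 0 1 :=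
    hT.quasiMeasurePreserving.ae ae_unitCubeMeasure_mem_Icc
  refine sum_sq_integral_mul_le_of_comp_eq_neg hT (cubeFlip_involutive j l) l2Orthonormal_haarPsi
    ?_ (memLp_rademacher_apply j l 2) ?_ (memLp_unitCubeMeasure_of_monotoneOn hf 2) ?_ ?_
  · intro α hα
    obtain ⟨hj, rfl⟩ := hs α hα
    filter_upwards [ae_unitCubeMeasure_mem_Ico] with x hx
    exact haarPsi_cubeFlip hj (hx j)
  · exact Filter.Eventually.of_forall (rademacher_cubeFlip j l)
  · filter_upwards [ae_unitCubeMeasure_mem_Icc, flip_mem] with x hx hflip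
    exact abs_oddPart_le_one (hval x hx) (hval _ hflip)
  · filter_upwards [ae_unitCubeMeasure_mem_Icc, flip_mem] with x hx hflip
    exact rademacher_mul_oddPart_cubeFlip j l hf hx hflip

lemma sum_card_support_mul_eq_sum_log {ι : Type*} [Fintype ι] {r : ℕ} {s : Finset (ι → ℕ)}
    (hs : ∀ α ∈ s, ∀ j, α j < 2 ^ r) (F : (ι → ℕ) → ℝ) :
    ∑ α ∈ s, (#{j | α j ≠ 0} : ℝ) * F α =
      ∑ p ∈ Finset.univ ×ˢ Finset.range r, ∑ α ∈ s with α p.1 ≠ 0 ∧ Nat.log 2 (α p.1) = p.2,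
        F α := by
  simp_rw [Finset.sum_filter (s := s)]
  rw [Finset.sum_comm]
  refine Finset.sum_congr rfl fun α hα => ?_
  rw [Finset.sum_product, ← nsmul_eq_mul, ← Finset.sum_const, Finset.sum_filter]
  refine Finset.sum_congr rfl fun j _ => ?_
  by_cases hj : α j = 0
  · simp [hj]
  · simp [hj, Nat.log_lt_of_lt_pow hj (hs α hα j)]

lemma integral_sq_le_one_of_mem_Icc {Ω : Type*} [MeasurableSpace Ω] {μ : Measure Ω}
    [IsProbabilityMeasure μ] {g : Ω → ℝ} (hg : ∀ᵐ x ∂μ, g x ∈ Set.Icc (-1) 1) :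
    ∫ x, g x ^ 2 ∂μ ≤ 1 := by
  have h : ∫ x, g x ^ 2 ∂μ ≤ ∫ _, (1 : ℝ) ∂μ := by
    refine integral_mono_of_nonneg (Filter.Eventually.of_forall fun x => sq_nonneg (g x))
      (integrable_const 1) ?_
    filter_upwards [hg] with x hx
    exact (sq_le_one_iff_abs_le_one _).2 (abs_le.2 hx)
  simpa only [integral_const, probReal_univ, one_smul] using h

lemma sum_integral_rademacher_mul_le_sqrt (hf : MonotoneOn f (Set.Icc 0 1))
    (hval : ∀ x ∈ Set.Icc 0 1, f x ∈ Set.Icc (-1) 1) (r : ℕ) :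
    ∑ p ∈ Finset.univ ×ˢ Finset.range r,
      ∫ x, rademacher p.2 (x p.1) * f x ∂unitCubeMeasure (Fin d) ≤ √(d * r) := by
  have norm_le : ∫ x, f x ^ 2 ∂unitCubeMeasure (Fin d) ≤ 1 :=
    integral_sq_le_one_of_mem_Icc (ae_unitCubeMeasure_mem_Icc.mono hval)
  refine (l2Orthonormal_rademacher.sum_integral_mul_le_sqrt
    (memLp_unitCubeMeasure_of_monotoneOn hf 2) _).trans (Real.sqrt_le_sqrt ?_)
  rw [Finset.card_product, Finset.card_univ, Fintype.card_fin, Finset.card_range, Nat.cast_mul]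
  exact mul_le_of_le_one_right (by positivity) norm_le

theorem sum_card_support_mul_sq_integral_haarPsi_mul_le (hf : MonotoneOn f (Set.Icc 0 1))
    (hval : ∀ x ∈ Set.Icc 0 1, f x ∈ Set.Icc (-1) 1) {r : ℕ} {s : Finset (Fin d → ℕ)}
    (hs : ∀ α ∈ s, ∀ j, α j < 2 ^ r) :
    ∑ α ∈ s, (#{j | α j ≠ 0} : ℝ) *
      (∫ x in Set.Icc (0 : Fin d → ℝ) 1, haarPsi d α x * f x) ^ 2 ≤ √(d * r) := by
  rw [restrict_Icc_eq_unitCubeMeasure, sum_card_support_mul_eq_sum_log hs]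
  refine le_trans (Finset.sum_le_sum fun p _ => ?_) (sum_integral_rademacher_mul_le_sqrt hf hval r)
  exact sum_sq_integral_haarPsi_mul_le_integral_rademacher_mul hf hval fun α hα =>
    (Finset.mem_filter.1 hα).2

theorem sum_sq_integral_haarPsi_mul_le (hf : MonotoneOn f (Set.Icc 0 1))
    (hval : ∀ x ∈ Set.Icc 0 1, f x ∈ Set.Icc (-1) 1) {k r : ℕ} {s : Finset (Fin d → ℕ)}
    (hsk : ∀ α ∈ s, k < #{j | α j ≠ 0}) (hsr : ∀ α ∈ s, ∀ j, α j < 2 ^ r) :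
    ∑ α ∈ s, (∫ x in Set.Icc (0 : Fin d → ℝ) 1, haarPsi d α x * f x) ^ 2 ≤
      √(d * r) / (k + 1) := by
  rw [le_div_iff₀' (by positivity), Finset.mul_sum]
  refine le_trans (Finset.sum_le_sum fun α hα => ?_)
    (sum_card_support_mul_sq_integral_haarPsi_mul_le hf hval hsr)
  gcongr
  exact_mod_cast hsk α hα

end HaarWavelets

theorem stmt16 (d k r : ℕ) (hd : 1 ≤ d) (hk : 1 ≤ k) (hr : 1 ≤ r)
    (f : (Fin d → ℝ) → ℝ)
    (hval : ∀ x ∈ Set.Icc (0 : Fin d → ℝ) 1, f x ∈ Set.Icc (-1 : ℝ) 1)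
    (hmono : ∀ x ∈ Set.Icc (0 : Fin d → ℝ) 1, ∀ z ∈ Set.Icc (0 : Fin d → ℝ) 1,
      x ≤ z → f x ≤ f z) :
    ∑ α ∈ Finset.univ.filter (fun α : Fin d → Fin (2 ^ r) =>
        k < (Finset.univ.filter fun j => (α j : ℕ) ≠ 0).card),
      (∫ x in Set.Icc (0 : Fin d → ℝ) 1, haarPsi d (fun j => (α j : ℕ)) x * f x) ^ 2
      ≤ Real.sqrt ((d : ℝ) * r) / (k + 1) := by
  let toNat : (Fin d → Fin (2 ^ r)) ↪ (Fin d → ℕ) :=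
    ⟨fun α j => α j, fun α β h => funext fun j => Fin.ext (congrFun h j)⟩
  refine (Finset.sum_map _ toNat fun α =>
    (∫ x in Set.Icc (0 : Fin d → ℝ) 1, haarPsi d α x * f x) ^ 2).symm.trans_le ?_
  refine sum_sq_integral_haarPsi_mul_le (fun x hx z hz => hmono x hx z hz) hval ?_ ?_ <;>
    simp only [Finset.forall_mem_map]
  · exact fun α hα => (Finset.mem_filter.1 hα).2
  · exact fun α _ j => (α j).isLt
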